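/- Refinement for safe programs (abstract form of the paper's Theorems 1 and 2). Let (S, stepS, finalS) be a source transition system and (T, stepT, finalT) a deterministic target transition system over the same result type R (deterministic: stepT ς ς1 and stepT ς ς2 imply ς1 = ς2; finalT ς r implies ς is stuck; finalT ς r1 and finalT ς r2 imply r1 = r2). Let ~ : S → T → Prop and a well-founded relation ≺ on S form a measured forward simulation: whenever σ1 ~ ς1 and stepS σ1 σ2, either there exists ς2 with stepT+ ς1 ς2 and σ2 ~ ς2, or σ2 ~ ς1 and σ2 ≺ σ1; and whenever σ ~ ς and finalS σ r, there exists ς' with stepT* ς ς' and finalT ς' r. Suppose σ0 ~ ς0 and σ0 is safe. Then (classically, using dependent choice) every behavior exhibited by ς0 is exhibited by σ0: if ς0 terminates with result r then σ0 terminates with result r; if ς0 diverges then σ0 diverges; and ς0 does not go wrong. -/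

import Mathlib

def Stuck {S : Type*} (step : S → S → Prop) (s : S) : Prop :=
  ¬ ∃ s', step s s'

def Terminates {S R : Type*} (step : S → S → Prop) (final : S → R → Prop)
    (s : S) (r : R) : Prop :=
  ∃ s', Relation.ReflTransGen step s s' ∧ final s' r

def Diverges {S : Type*} (step : S → S → Prop) (s : S) : Prop :=
  ∃ f : ℕ → S, f 0 = s ∧ ∀ n, step (f n) (f (n + 1))

def GoesWrong {S R : Type*} (step : S → S → Prop) (final : S → R → Prop)
    (s : S) : Prop :=
  ∃ s', Relation.ReflTransGen step s s' ∧ Stuck step s' ∧ ¬ ∃ r, final s' r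

def Safe {S R : Type*} (step : S → S → Prop) (final : S → R → Prop)
    (s : S) : Prop :=
  ∀ s', Relation.ReflTransGen step s s' → (∃ s'', step s' s'') ∨ ∃ r, final s' r

/-!
A safe source state terminates or diverges. A measured forward simulation transports either behavior
to the target: termination by following the execution, divergence because an infinite source run
cannot stutter forever, `≺` being well-founded. A state of a deterministic system has exactly one
behavior, so the transported one is the only behavior of the target state.
-/

section TransitionSystem

variable {S R : Type*} {step : S → S → Prop} {final : S → R → Prop} {s t u : S}

theorem diverges_iff_not_acc : Diverges step s ↔ ¬ Acc (Function.swap step) s :=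
  (not_acc_iff_exists_descending_chain (r := Function.swap step)).symm

theorem Safe.of_step (hs : Safe step final s) (hst : step s t) : Safe step final t :=
  fun u htu => hs u (.head hst htu)

theorem Terminates.head {r : R} (hst : step s t) (ht : Terminates step final t r) :
    Terminates step final s r :=
  let ⟨u, htu, hu⟩ := ht
  ⟨u, .head hst htu, hu⟩

theorem Safe.terminates_or_diverges (hs : Safe step final s) :
    (∃ r, Terminates step final s r) ∨ Diverges step s := by
  rw [diverges_iff_not_acc, or_iff_not_imp_right, not_not]
  intro hacc
  induction hacc with
  | intro s _ ih =>
    rcases hs s .refl with ⟨t, hst⟩ | ⟨r, hr⟩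
    · obtain ⟨r, ht⟩ := ih t hst (hs.of_step hst)
      exact ⟨r, ht.head hst⟩
    · exact ⟨r, s, .refl, hr⟩

theorem Stuck.eq_of_reflTransGen (hs : Stuck step s) (hst : Relation.ReflTransGen step s t) :
    t = s :=
  (Relation.reflTransGen_iff_eq (not_exists.mp hs)).mp hst

theorem Stuck.eq_of_rightUnique (hdet : Relator.RightUnique step) (ht : Stuck step t)
    (hu : Stuck step u) (hst : Relation.ReflTransGen step s t)
    (hsu : Relation.ReflTransGen step s u) : t = u :=
  (Relation.ReflTransGen.total_of_right_unique hdet hst hsu).elim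
    (fun htu => (ht.eq_of_reflTransGen htu).symm) hu.eq_of_reflTransGen

theorem Stuck.acc_of_reflTransGen (hdet : Relator.RightUnique step) (ht : Stuck step t)
    (hst : Relation.ReflTransGen step s t) : Acc (Function.swap step) s := by
  induction hst using Relation.ReflTransGen.head_induction_on with
  | refl => exact ⟨_, fun u htu => (ht ⟨u, htu⟩).elim⟩
  | head hsu _ ih => exact ⟨_, fun _ hsv => hdet hsu hsv ▸ ih⟩

theorem Terminates.not_diverges (hdet : Relator.RightUnique step)
    (hstuck : ∀ s r, final s r → Stuck step s) {r : R} (hs : Terminates step final s r) :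
    ¬ Diverges step s := by
  obtain ⟨t, hst, ht⟩ := hs
  exact fun hdiv => diverges_iff_not_acc.mp hdiv ((hstuck t r ht).acc_of_reflTransGen hdet hst)

theorem Terminates.result_unique (hdet : Relator.RightUnique step)
    (hstuck : ∀ s r, final s r → Stuck step s) (hfinal : Relator.RightUnique final) {r₁ r₂ : R}
    (h₁ : Terminates step final s r₁) (h₂ : Terminates step final s r₂) : r₁ = r₂ := by
  obtain ⟨t, hst, ht⟩ := h₁
  obtain ⟨u, hsu, hu⟩ := h₂
  obtain rfl : t = u := (hstuck t r₁ ht).eq_of_rightUnique hdet (hstuck u r₂ hu) hst hsu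
  exact hfinal ht hu

theorem Terminates.not_goesWrong (hdet : Relator.RightUnique step)
    (hstuck : ∀ s r, final s r → Stuck step s) {r : R} (hs : Terminates step final s r) :
    ¬ GoesWrong step final s := by
  obtain ⟨t, hst, ht⟩ := hs
  rintro ⟨u, hsu, hu, hnonfinal⟩
  obtain rfl : t = u := (hstuck t r ht).eq_of_rightUnique hdet hu hst hsu
  exact hnonfinal ⟨r, ht⟩

theorem Diverges.not_goesWrong (hdet : Relator.RightUnique step) (hs : Diverges step s) :
    ¬ GoesWrong step final s := by
  rintro ⟨t, hst, ht, -⟩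
  exact diverges_iff_not_acc.mp hs (ht.acc_of_reflTransGen hdet hst)

end TransitionSystem

section Simulation

variable {S T R : Type*} {stepS : S → S → Prop} {finalS : S → R → Prop}
  {stepT : T → T → Prop} {finalT : T → R → Prop} {sim : S → T → Prop} {lt : S → S → Prop}
  {σ : S} {ς : T}

/-- The step diagram of a measured forward simulation: the target answers a source step with at
least one step of its own, or stutters while the source state decreases along the well-founded
relation `lt`. Final states are left out, since the transport of divergence does not involve
them. -/
structure IsMeasuredSimulation (stepS : S → S → Prop) (stepT : T → T → Prop)
    (sim : S → T → Prop) (lt : S → S → Prop) : Prop where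
  wf : WellFounded lt
  step : ∀ σ₁ ς₁ σ₂, sim σ₁ ς₁ → stepS σ₁ σ₂ →
    (∃ ς₂, Relation.TransGen stepT ς₁ ς₂ ∧ sim σ₂ ς₂) ∨ (sim σ₂ ς₁ ∧ lt σ₂ σ₁)

theorem IsMeasuredSimulation.exists_reflTransGen (h : IsMeasuredSimulation stepS stepT sim lt)
    (σ₁ : S) (ς₁ : T) (σ₂ : S) (hsim : sim σ₁ ς₁) (hσ : stepS σ₁ σ₂) :
    ∃ ς₂, Relation.ReflTransGen stepT ς₁ ς₂ ∧ sim σ₂ ς₂ := by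
  rcases h.step σ₁ ς₁ σ₂ hsim hσ with ⟨ς₂, hς, hsim₂⟩ | ⟨hsim₂, -⟩
  · exact ⟨ς₂, hς.to_reflTransGen, hsim₂⟩
  · exact ⟨ς₁, .refl, hsim₂⟩

theorem Terminates.of_simulation
    (hstep : ∀ σ₁ ς₁ σ₂, sim σ₁ ς₁ → stepS σ₁ σ₂ →
      ∃ ς₂, Relation.ReflTransGen stepT ς₁ ς₂ ∧ sim σ₂ ς₂)
    (hfinal : ∀ σ ς r, sim σ ς → finalS σ r →
      ∃ ς', Relation.ReflTransGen stepT ς ς' ∧ finalT ς' r)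
    (hsim : sim σ ς) {r : R} (hσ : Terminates stepS finalS σ r) :
    Terminates stepT finalT ς r := by
  obtain ⟨σ', hσσ', hσ'⟩ := hσ
  induction hσσ' using Relation.ReflTransGen.head_induction_on generalizing ς with
  | refl => exact hfinal σ' ς r hsim hσ'
  | head hσ _ ih =>
    obtain ⟨ς₂, hς, hsim₂⟩ := hstep _ ς _ hsim hσ
    obtain ⟨ς', hςς', hfinalς⟩ := ih hsim₂
    exact ⟨ς', hς.trans hςς', hfinalς⟩

/-- Lexicographic induction: on target executions first, and on `lt` while the target stutters. -/
theorem IsMeasuredSimulation.acc (h : IsMeasuredSimulation stepS stepT sim lt)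
    (hsim : sim σ ς) (hς : Acc (Function.swap stepT) ς) : Acc (Function.swap stepS) σ := by
  have hς_trans : Acc (Relation.TransGen (Function.swap stepT)) ς := hς.transGen
  clear hς
  induction hς_trans generalizing σ with
  | intro ς _ ih_target =>
    induction σ using h.wf.induction with
    | _ σ ih_source =>
      refine ⟨σ, fun σ₂ hσ => ?_⟩
      rcases h.step σ ς σ₂ hsim hσ with ⟨ς₂, hς₂, hsim₂⟩ | ⟨hsim₂, hlt⟩
      · exact ih_target ς₂ (Relation.transGen_swap.mpr hς₂) hsim₂
      · exact ih_source σ₂ hlt hsim₂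

theorem IsMeasuredSimulation.diverges (h : IsMeasuredSimulation stepS stepT sim lt)
    (hsim : sim σ ς) (hσ : Diverges stepS σ) : Diverges stepT ς :=
  diverges_iff_not_acc.mpr fun hς => diverges_iff_not_acc.mp hσ (h.acc hsim hς)

theorem refinement_for_safe_programs_general (hdet : Relator.RightUnique stepT)
    (hstuck : ∀ ς r, finalT ς r → Stuck stepT ς) (hfinalDet : Relator.RightUnique finalT)
    (h : IsMeasuredSimulation stepS stepT sim lt)
    (hfinal : ∀ σ ς r, sim σ ς → finalS σ r →
      ∃ ς', Relation.ReflTransGen stepT ς ς' ∧ finalT ς' r)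
    (hsim : sim σ ς) (hσ : (∃ r, Terminates stepS finalS σ r) ∨ Diverges stepS σ) :
    (∀ r, Terminates stepT finalT ς r → Terminates stepS finalS σ r) ∧
    (Diverges stepT ς → Diverges stepS σ) ∧
    ¬ GoesWrong stepT finalT ς := by
  rcases hσ with ⟨r₀, hσ⟩ | hσ
  · have hς : Terminates stepT finalT ς r₀ := hσ.of_simulation h.exists_reflTransGen hfinal hsim
    refine ⟨fun r hr => ?_, fun hdiv => (hς.not_diverges hdet hstuck hdiv).elim,
      hς.not_goesWrong hdet hstuck⟩
    rwa [hr.result_unique hdet hstuck hfinalDet hς]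
  · have hς : Diverges stepT ς := h.diverges hsim hσ
    exact ⟨fun r hr => (hr.not_diverges hdet hstuck hς).elim, fun _ => hσ,
      hς.not_goesWrong hdet⟩

end Simulation

/-- refinement for safe programs (abstract form of the paper's
Theorems 1 and 2). -/
theorem refinement_for_safe_programs {S T R : Type*}
    (stepS : S → S → Prop) (finalS : S → R → Prop)
    (stepT : T → T → Prop) (finalT : T → R → Prop)
    (hdetT : ∀ ς ς1 ς2, stepT ς ς1 → stepT ς ς2 → ς1 = ς2)
    (hfinalStuckT : ∀ ς r, finalT ς r → Stuck stepT ς)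
    (hfinalDetT : ∀ ς r1 r2, finalT ς r1 → finalT ς r2 → r1 = r2)
    (sim : S → T → Prop) (lt : S → S → Prop) (hwf : WellFounded lt)
    (hstep : ∀ σ1 ς1 σ2, sim σ1 ς1 → stepS σ1 σ2 →
      (∃ ς2, Relation.TransGen stepT ς1 ς2 ∧ sim σ2 ς2) ∨
      (sim σ2 ς1 ∧ lt σ2 σ1))
    (hfinal : ∀ σ ς r, sim σ ς → finalS σ r →
      ∃ ς', Relation.ReflTransGen stepT ς ς' ∧ finalT ς' r)
    (σ0 : S) (ς0 : T) (hsim : sim σ0 ς0) (hsafe : Safe stepS finalS σ0) :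
    (∀ r, Terminates stepT finalT ς0 r → Terminates stepS finalS σ0 r) ∧
    (Diverges stepT ς0 → Diverges stepS σ0) ∧
    ¬ GoesWrong stepT finalT ς0 := by
  exact refinement_for_safe_programs_general hdetT hfinalStuckT hfinalDetT ⟨hwf, hstep⟩ hfinal hsim
    hsafe.terminates_or_diverges
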